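/- In the regime switching model, suppose every distribution P_a has support contained in {1,…,M} for some M < ∞ independent of a. Then for any n ≥ 1 and 0 ≤ r ≤ n−1: P{𝓛_n = r} ≤ Σ_{m=r}^n C'_{r,m} P{L_n = m}, where C'_{r,r} = sup_{a∈A} Σ_{k=1}^M p_{a,k}^{1+r} and C'_{r,m} = c(r) M / m for r+1 ≤ m ≤ n, with c(0) = e^{−1} and c(r) = e(1+r)/√π for r ≥ 1. -/

import Mathlib

open MeasureTheory ENNReal Finset

/-- The constant `c(r)`: `c(0) = e⁻¹` and `c(r) = e(1+r)/√π` for `r ≥ 1`. -/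
noncomputable def cDGP (r : ℕ) : ℝ≥0∞ :=
  if r = 0 then ENNReal.ofReal (Real.exp (-1))
  else ENNReal.ofReal (Real.exp 1 * (1 + r) / Real.sqrt Real.pi)

/-!
Given the regimes, the letters are independent, so if `L` of the `n` earlier regimes agree with the
last one and the last letter is `k`, the number of earlier repeats of the last pair is binomial with
parameters `L` and `q = p a k`. Hence, given the regimes, `{𝓛 = r}` has probability
`∑ k, q * Bin(L, q){r}`. For `L = r` this is `∑ k, q ^ (r + 1)`; for `L > r` each of the at most `M`
nonzero terms is at most `c(r) / L`. When `r = 0` that is `L q (1 - q) ^ L ≤ L q exp (-L q) ≤ e⁻¹`;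
when `r ≥ 1` it follows from `(L + 1) * q * Bin(L, q){r} = (r + 1) * Bin(L + 1, q){r + 1} ≤ r + 1`.
Averaging over the regimes gives the bound.
-/

section Tsum

theorem tsum_pi_snoc {α : Type*} {n : ℕ} (F : (Fin (n + 1) → α) → ℝ≥0∞) :
    ∑' x, F x = ∑' (x : Fin n → α) (y : α), F (Fin.snoc x y) := by
  rw [← (Fin.snocEquiv fun _ => α).tsum_eq F, ENNReal.tsum_prod', ENNReal.tsum_comm]
  rfl

theorem tsum_fin_pi_prod {κ : Type*} {n : ℕ} (f : Fin n → κ → ℝ≥0∞) :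
    ∑' x : Fin n → κ, ∏ i, f i (x i) = ∏ i, ∑' k, f i k := by
  induction n with
  | zero => simp
  | succ n ih =>
    simp_rw [tsum_pi_snoc, Fin.prod_univ_castSucc, Fin.snoc_castSucc, Fin.snoc_last,
      ENNReal.tsum_mul_left, ENNReal.tsum_mul_right, ih]

theorem tsum_pi_prod {ι κ : Type*} [Fintype ι] (f : ι → κ → ℝ≥0∞) :
    ∑' x : ι → κ, ∏ i, f i (x i) = ∏ i, ∑' k, f i k := by
  let e := Fintype.equivFin ι
  rw [← (e.symm.arrowCongr (Equiv.refl κ)).tsum_eq, ← e.symm.prod_comp, ← tsum_fin_pi_prod]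
  exact tsum_congr fun x => (e.symm.prod_comp _).symm.trans <| by simp

theorem tsum_le_encard_support_mul {κ : Type*} {f : κ → ℝ≥0∞} {c : ℝ≥0∞} (hf : ∀ k, f k ≤ c) :
    ∑' k, f k ≤ (Function.support f).encard * c := by
  rw [← tsum_subtype_support, ← ENNReal.tsum_set_const]
  exact ENNReal.tsum_le_tsum fun k => hf k

end Tsum

theorem encard_support_le_of_eq_zero {β : Type*} [Zero β] {f : ℕ → β} {M : ℕ}
    (hf : ∀ k, M ≤ k → f k = 0) : (Function.support f).encard ≤ M := by
  have hsub : Function.support f ⊆ range M := fun k hk => by simpa using mt (hf k) hk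
  simpa only [Set.encard_coe_eq_coe_finsetCard, card_range] using Set.encard_le_encard hsub

/-- The mass that the binomial distribution with `m` trials and success probability `q ≤ 1` gives
to `r`, with values in `ℝ≥0∞`; it is the law of the number of repeats given the regimes. -/
noncomputable def binomialMass (q : ℝ≥0∞) (m r : ℕ) : ℝ≥0∞ :=
  m.choose r * q ^ r * (1 - q) ^ (m - r)

section BinomialMass

variable {q : ℝ≥0∞}

theorem binomialMass_of_lt {m r : ℕ} (h : m < r) : binomialMass q m r = 0 := by
  simp [binomialMass, Nat.choose_eq_zero_of_lt h]

theorem binomialMass_self (r : ℕ) : binomialMass q r r = q ^ r := by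
  simp [binomialMass]

theorem binomialMass_le_one (hq : q ≤ 1) (m r : ℕ) : binomialMass q m r ≤ 1 := by
  rcases lt_or_ge m r with h | h
  · simp [binomialMass_of_lt h]
  calc binomialMass q m r
      = q ^ r * (1 - q) ^ (m - r) * m.choose r := by rw [binomialMass]; ring
    _ ≤ ∑ k ∈ range (m + 1), q ^ k * (1 - q) ^ (m - k) * m.choose k :=
        single_le_sum (f := fun k => q ^ k * (1 - q) ^ (m - k) * (m.choose k : ℝ≥0∞))
          (fun _ _ => zero_le) (mem_range_succ_iff.2 h)
    _ = 1 := by rw [← add_pow, add_tsub_cancel_of_le hq, one_pow]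

theorem add_one_mul_mul_binomialMass (m r : ℕ) :
    (m + 1) * (q * binomialMass q m r) = (r + 1) * binomialMass q (m + 1) (r + 1) := by
  have hchoose : ((m : ℝ≥0∞) + 1) * m.choose r = (m + 1).choose (r + 1) * (r + 1) := by
    exact_mod_cast Nat.add_one_mul_choose_eq m r
  rw [binomialMass, binomialMass, Nat.add_sub_add_right]
  calc (m + 1) * (q * (m.choose r * q ^ r * (1 - q) ^ (m - r)))
      = (m + 1) * m.choose r * (q ^ (r + 1) * (1 - q) ^ (m - r)) := by ring
    _ = _ := by rw [hchoose]; ring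

theorem mul_binomialMass_le (hq : q ≤ 1) (m r : ℕ) :
    q * binomialMass q m r ≤ (r + 1) / m := by
  refine ENNReal.le_div_iff_mul_le (.inr (by simp)) (.inl (by simp)) |>.2 ?_
  calc q * binomialMass q m r * m
      ≤ (m + 1) * (q * binomialMass q m r) := by rw [mul_comm]; gcongr; exact le_self_add
    _ = (r + 1) * binomialMass q (m + 1) (r + 1) := add_one_mul_mul_binomialMass m r
    _ ≤ r + 1 := mul_le_of_le_one_right' (binomialMass_le_one hq _ _)

theorem mul_mul_one_sub_pow_le_exp_neg_one {x : ℝ} (hx : x ≤ 1) (m : ℕ) :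
    m * x * (1 - x) ^ m ≤ Real.exp (-1) := by
  have hpow : (1 - x) ^ m ≤ Real.exp (-(m * x)) := by
    rw [← mul_neg, Real.exp_nat_mul]
    exact pow_le_pow_left₀ (sub_nonneg.2 hx) (Real.one_sub_le_exp_neg x) m
  have hlin : m * x ≤ Real.exp (m * x - 1) := by linarith [Real.add_one_le_exp (m * x - 1)]
  calc m * x * (1 - x) ^ m
      ≤ Real.exp (m * x - 1) * Real.exp (-(m * x)) :=
        mul_le_mul hlin hpow (pow_nonneg (sub_nonneg.2 hx) m) (Real.exp_nonneg _)
    _ = Real.exp (-1) := by rw [← Real.exp_add]; ring_nf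

theorem mul_binomialMass_zero_le (hq : q ≤ 1) (m : ℕ) :
    q * binomialMass q m 0 ≤ ENNReal.ofReal (Real.exp (-1)) / m := by
  have hexp : ENNReal.ofReal (Real.exp (-1)) ≠ 0 := by simp [Real.exp_pos]
  refine (ENNReal.le_div_iff_mul_le (.inr hexp) (.inl (by simp))).2 ?_
  have hq_top : q ≠ ∞ := ne_top_of_le_ne_top one_ne_top hq
  have hq_real : q.toReal ≤ 1 := toReal_le_of_le_ofReal zero_le_one (by simpa using hq)
  refine (le_ofReal_iff_toReal_le ?_ (Real.exp_nonneg _)).2 ?_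
  · simp [binomialMass, hq_top, mul_eq_top]
  · simpa [binomialMass, toReal_sub_of_le hq, mul_comm, mul_left_comm, mul_assoc] using
      mul_mul_one_sub_pow_le_exp_neg_one hq_real m

theorem mul_binomialMass_le_cDGP (hq : q ≤ 1) (m r : ℕ) :
    q * binomialMass q m r ≤ cDGP r / m := by
  rcases eq_or_ne r 0 with rfl | hr
  · simpa [cDGP] using mul_binomialMass_zero_le hq m
  refine (mul_binomialMass_le hq m r).trans ?_
  gcongr
  have hsqrt : √Real.pi ≤ Real.exp 1 := by
    calc √Real.pi ≤ 2 := Real.sqrt_le_iff.2 ⟨zero_le_two, by linarith [Real.pi_le_four]⟩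
      _ ≤ Real.exp 1 := by linarith [Real.exp_one_gt_d9]
  have hreal : (r + 1 : ℝ) ≤ Real.exp 1 * (1 + r) / √Real.pi := by
    rw [le_div_iff₀ (Real.sqrt_pos.2 Real.pi_pos), add_comm, mul_comm]
    gcongr
  rw [cDGP, if_neg hr, ← ENNReal.ofReal_natCast, ← ENNReal.ofReal_one,
    ← ENNReal.ofReal_add r.cast_nonneg zero_le_one]
  exact ENNReal.ofReal_le_ofReal hreal

end BinomialMass

section Count

variable {ι κ : Type*} [Fintype ι] [DecidableEq κ]

theorem tsum_ite_eq_zero_else {f : κ → ℝ≥0∞} (hf : ∑' k, f k = 1) (k₀ : κ) :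
    ∑' k, (if k = k₀ then 0 else f k) = 1 - f k₀ := by
  have hne : f k₀ ≠ ∞ := ne_top_of_le_ne_top one_ne_top (hf ▸ ENNReal.le_tsum k₀)
  rw [← hf, ENNReal.tsum_eq_add_tsum_ite (f := f) k₀, ENNReal.add_sub_cancel_left hne]
  congr!

theorem tsum_prod_of_filter_eq [DecidableEq ι] {f : ι → κ → ℝ≥0∞} (hf : ∀ i, ∑' k, f i k = 1)
    {J S : Finset ι} (hS : S ⊆ J) {k₀ : κ} {q : ℝ≥0∞} (hq : ∀ i ∈ J, f i k₀ = q) :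
    ∑' x : ι → κ, (if {i ∈ J | x i = k₀} = S then ∏ i, f i (x i) else 0) =
      q ^ #S * (1 - q) ^ (#J - #S) := by
  have hmem (x : ι → κ) : {i ∈ J | x i = k₀} = S ↔ ∀ i, i ∈ J → (x i = k₀ ↔ i ∈ S) := by
    grind
  have hrow (i : ι) : ∑' k, (if i ∈ J → (k = k₀ ↔ i ∈ S) then f i k else 0) =
      (if i ∈ S then q else 1) * (if i ∈ J \ S then 1 - q else 1) := by
    by_cases hiS : i ∈ S
    · simp [hiS, hS hiS, hq i (hS hiS)]
    by_cases hiJ : i ∈ J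
    · simp [hiS, hiJ, ite_not, tsum_ite_eq_zero_else (hf i), hq i hiJ]
    · simp [hiS, hiJ, hf]
  calc _ = ∑' x : ι → κ, ∏ i, (if i ∈ J → (x i = k₀ ↔ i ∈ S) then f i (x i) else 0) := by
        simp only [hmem, prod_ite_zero, mem_univ, true_imp_iff]
    _ = _ := by
        rw [tsum_pi_prod fun i k => if i ∈ J → (k = k₀ ↔ i ∈ S) then f i k else 0]
        simp only [hrow, prod_mul_distrib, prod_ite_mem, univ_inter, prod_const,
          card_sdiff_of_subset hS]

theorem tsum_prod_of_card_filter_eq {f : ι → κ → ℝ≥0∞} (hf : ∀ i, ∑' k, f i k = 1)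
    {J : Finset ι} {k₀ : κ} {q : ℝ≥0∞} (hq : ∀ i ∈ J, f i k₀ = q) (r : ℕ) :
    ∑' x : ι → κ, (if #{i ∈ J | x i = k₀} = r then ∏ i, f i (x i) else 0) =
      binomialMass q #J r := by
  classical
  have hsplit (x : ι → κ) : (if #{i ∈ J | x i = k₀} = r then ∏ i, f i (x i) else 0) =
      ∑ S ∈ powersetCard r J, if {i ∈ J | x i = k₀} = S then ∏ i, f i (x i) else 0 := by
    simp [sum_ite_eq, mem_powersetCard]
  calc _ = ∑ S ∈ powersetCard r J, q ^ r * (1 - q) ^ (#J - r) := by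
        simp_rw [hsplit]
        rw [Summable.tsum_finsetSum fun _ _ => ENNReal.summable]
        refine sum_congr rfl fun S hS => ?_
        obtain ⟨hSJ, rfl⟩ := mem_powersetCard.1 hS
        exact tsum_prod_of_filter_eq hf hSJ hq
    _ = binomialMass q #J r := by
        rw [sum_const, card_powersetCard, nsmul_eq_mul, binomialMass, mul_assoc]

end Count

/-- The number of earlier occurrences of the last entry of `x`. On the path of pairs it is the
paper's `𝓛_n`, on the path of regimes its `L_n`. -/
def repeatCount {α : Type*} [DecidableEq α] {n : ℕ} (x : Fin (n + 1) → α) : ℕ :=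
  #{i : Fin n | x i.castSucc = x (Fin.last n)}

/-- The conditional probability of the letters `k` given the regimes `x`. -/
noncomputable def letterWeight {A κ : Type*} (p : A → κ → ℝ≥0∞) {n : ℕ} (x : Fin n → A)
    (k : Fin n → κ) : ℝ≥0∞ :=
  ∏ i, p (x i) (k i)

/-- The probability that the first `n` regimes are `x`. The transition rule `R` reads an infinite
sequence, so `x` is continued by `d`; the choice of `d` does not matter in a model, where `R i` only
depends on the first `i` regimes. -/
noncomputable def regimeWeight {A : Type*} (R : ℕ → (ℕ → A) → A → ℝ≥0∞) (d : ℕ → A) {n : ℕ}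
    (x : Fin n → A) : ℝ≥0∞ :=
  ∏ i : Fin n, R i (Function.extend Fin.val x d) (x i)

/-- The coefficient `C'_{r,m}` of `P{L_n = m}` in the bound for `P{𝓛_n = r}`, for `r ≤ m`. -/
noncomputable def repeatCoeff {A κ : Type*} (p : A → κ → ℝ≥0∞) (M r m : ℕ) : ℝ≥0∞ :=
  if m = r then ⨆ a, ∑' k, p a k ^ (r + 1) else cDGP r * M / m

section RepeatCount

variable {A κ : Type*}

theorem sum_range_ite_eq_repeatCount {α : Type*} [DecidableEq α] (f : ℕ → α) (n : ℕ) :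
    (∑ i ∈ range n, if f i = f n then 1 else 0) = repeatCount fun i : Fin (n + 1) => f i := by
  rw [repeatCount, card_filter, Finset.sum_range]
  rfl

theorem repeatCount_le [DecidableEq A] {n : ℕ} (x : Fin (n + 1) → A) : repeatCount x ≤ n :=
  (card_filter_le _ _).trans_eq (card_fin n)

variable {p : A → κ → ℝ≥0∞} (hp : ∀ a, ∑' k, p a k = 1)
include hp

theorem tsum_letterWeight {n : ℕ} (x : Fin n → A) : ∑' k, letterWeight p x k = 1 := by
  simp only [letterWeight, tsum_pi_prod (fun i => p (x i)), hp, prod_const_one]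

theorem tsum_letterWeight_of_repeatCount_eq [DecidableEq A] [DecidableEq κ] {n : ℕ}
    (x : Fin (n + 1) → A) (r : ℕ) :
    ∑' k, (if repeatCount (fun i => (x i, k i)) = r then letterWeight p x k else 0) =
      ∑' k, p (x (Fin.last n)) k * binomialMass (p (x (Fin.last n)) k) (repeatCount x) r := by
  rw [tsum_pi_snoc, ENNReal.tsum_comm]
  refine tsum_congr fun y => ?_
  have hrepeat (k : Fin n → κ) :
      repeatCount (fun i => (x i, (Fin.snoc k y : Fin (n + 1) → κ) i)) =
        #{i ∈ ({i | x i.castSucc = x (Fin.last n)} : Finset (Fin n)) | k i = y} := by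
    simp [repeatCount, filter_filter]
  have hbinomial := tsum_prod_of_card_filter_eq (fun i : Fin n => hp (x i.castSucc)) (k₀ := y)
    (J := {i | x i.castSucc = x (Fin.last n)}) (q := p (x (Fin.last n)) y)
    (fun i hi => by rw [(mem_filter.1 hi).2]) r
  rw [repeatCount, ← hbinomial, ← ENNReal.tsum_mul_left]
  refine tsum_congr fun k => ?_
  simp only [hrepeat, letterWeight, Fin.prod_univ_castSucc, Fin.snoc_castSucc, Fin.snoc_last,
    mul_ite, mul_zero, mul_comm]

variable {M : ℕ} (hM : ∀ a, (Function.support (p a)).encard ≤ M)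
include hM

theorem tsum_mul_binomialMass_le_repeatCoeff (a : A) {m r : ℕ} (hrm : r ≤ m) :
    ∑' k, p a k * binomialMass (p a k) m r ≤ repeatCoeff p M r m := by
  rcases hrm.eq_or_lt with rfl | hlt
  · simp only [repeatCoeff, if_true, binomialMass_self, ← pow_succ']
    exact le_iSup (fun a => ∑' k, p a k ^ (r + 1)) a
  have hsupport : (Function.support fun k => p a k * binomialMass (p a k) m r).encard ≤ M :=
    (Set.encard_le_encard (Function.support_mul_subset_left _ _)).trans (hM a)
  have hle (k : κ) : p a k ≤ 1 := hp a ▸ ENNReal.le_tsum k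
  calc ∑' k, p a k * binomialMass (p a k) m r
      ≤ (Function.support fun k => p a k * binomialMass (p a k) m r).encard * (cDGP r / m) :=
        tsum_le_encard_support_mul fun k => mul_binomialMass_le_cDGP (hle k) m r
    _ ≤ M * (cDGP r / m) := by gcongr; exact_mod_cast hsupport
    _ = repeatCoeff p M r m := by
        rw [repeatCoeff, if_neg hlt.ne', mul_comm (cDGP r), mul_div_assoc]

theorem tsum_letterWeight_of_repeatCount_eq_le [DecidableEq A] [DecidableEq κ] {n : ℕ}
    (x : Fin (n + 1) → A) (r : ℕ) :
    ∑' k, (if repeatCount (fun i => (x i, k i)) = r then letterWeight p x k else 0) ≤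
      ∑ m ∈ Icc r n, repeatCoeff p M r m * if repeatCount x = m then 1 else 0 := by
  rw [tsum_letterWeight_of_repeatCount_eq hp]
  simp only [mul_ite, mul_one, mul_zero, sum_ite_eq, mem_Icc, repeatCount_le, and_true]
  split_ifs with h
  · exact tsum_mul_binomialMass_le_repeatCoeff hp hM _ h
  · simp [binomialMass_of_lt (not_le.1 h)]

end RepeatCount

-- `W` is not assumed measurable: subadditivity bounds `P (W ⁻¹' E)` and `P (W ⁻¹' Eᶜ)` by their
-- fiber sums, and these add up to the full mass, so both bounds are equalities.
theorem measure_preimage_eq_tsum {Ω S : Type*} [MeasurableSpace Ω] {P : Measure Ω}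
    [IsFiniteMeasure P] [Countable S] {W : Ω → S} (hW : ∑' s, P (W ⁻¹' {s}) = P Set.univ)
    (E : Set S) : P (W ⁻¹' E) = ∑' s : E, P (W ⁻¹' {s.1}) := by
  have hle (E : Set S) : P (W ⁻¹' E) ≤ ∑' s : E, P (W ⁻¹' {s.1}) := by
    rw [← Set.biUnion_preimage_singleton]
    exact measure_biUnion_le P E.to_countable _
  have hsum : ∑' s : E, P (W ⁻¹' {s.1}) + ∑' s : ↑Eᶜ, P (W ⁻¹' {s.1}) = P Set.univ := by
    rw [← hW]
    exact ENNReal.summable.tsum_add_tsum_compl (f := fun s => P (W ⁻¹' {s})) ENNReal.summable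
  have hfinite : ∑' s : ↑Eᶜ, P (W ⁻¹' {s.1}) ≠ ∞ :=
    ne_top_of_le_ne_top (measure_ne_top P _) (hsum ▸ le_add_self)
  refine (hle E).antisymm ((ENNReal.add_le_add_iff_right hfinite).1 ?_)
  calc _ = P (W ⁻¹' E ∪ W ⁻¹' Eᶜ) := by rw [hsum, Set.preimage_compl, Set.union_compl_self]
    _ ≤ P (W ⁻¹' E) + P (W ⁻¹' Eᶜ) := measure_union_le _ _
    _ ≤ _ := by gcongr; exact hle Eᶜ

/-- The regime switching model for `Z i = (regime, letter)`: given the regimes `a 0, …, a (n - 1)`,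
the next regime has law `R n a`, and given all regimes the letters are independent with laws
`p (a i)`. The process is described by its cylinder probabilities alone. -/
structure IsRegimeSwitching {A κ Ω : Type*} [MeasurableSpace Ω] (P : Measure Ω)
    (Z : ℕ → Ω → A × κ) (p : A → κ → ℝ≥0∞) (R : ℕ → (ℕ → A) → A → ℝ≥0∞) : Prop where
  tsum_letter : ∀ a, ∑' k, p a k = 1
  transition_congr : ∀ (n : ℕ) (a a' : ℕ → A), (∀ i < n, a i = a' i) → R n a = R n a'
  tsum_transition : ∀ (n : ℕ) (a : ℕ → A), ∑' b, R n a b = 1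
  measure_cylinder : ∀ (n : ℕ) (a : ℕ → A) (k : ℕ → κ),
    P (⋂ i ∈ range (n + 1), {ω | Z i ω = (a i, k i)}) =
      (∏ i ∈ range (n + 1), R i a (a i)) * ∏ i ∈ range (n + 1), p (a i) (k i)

/-- The first `n` regimes and the first `n` letters, the discrete variable through which all events
considered here factor. -/
def splitPath {A κ Ω : Type*} (Z : ℕ → Ω → A × κ) (n : ℕ) (ω : Ω) : (Fin n → A) × (Fin n → κ) :=
  (fun i => (Z i ω).1, fun i => (Z i ω).2)

theorem extend_snoc_of_lt {α : Type*} {n : ℕ} (x : Fin n → α) (y : α) (d : ℕ → α) {i : ℕ}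
    (hi : i < n) :
    Function.extend Fin.val (Fin.snoc x y : Fin (n + 1) → α) d i =
      Function.extend Fin.val x d i := by
  lift i to Fin n using hi
  rw [Fin.val_injective.extend_apply, ← Fin.val_castSucc, Fin.val_injective.extend_apply,
    Fin.snoc_castSucc]

namespace IsRegimeSwitching

variable {A κ Ω : Type*} [MeasurableSpace Ω] {P : Measure Ω} {Z : ℕ → Ω → A × κ}
  {p : A → κ → ℝ≥0∞} {R : ℕ → (ℕ → A) → A → ℝ≥0∞} (h : IsRegimeSwitching P Z p R)
include h

theorem tsum_regimeWeight (d : ℕ → A) (n : ℕ) : ∑' x : Fin n → A, regimeWeight R d x = 1 := by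
  induction n with
  | zero => simp [regimeWeight]
  | succ n ih =>
    have hsnoc (x : Fin n → A) (b : A) : regimeWeight R d (Fin.snoc x b : Fin (n + 1) → A) =
        regimeWeight R d x * R n (Function.extend Fin.val x d) b := by
      have hR (i : ℕ) (hi : i ≤ n) := h.transition_congr i
        (Function.extend Fin.val (Fin.snoc x b : Fin (n + 1) → A) d)
        (Function.extend Fin.val x d) fun j hj => extend_snoc_of_lt x b d (hj.trans_le hi)
      simp only [regimeWeight, Fin.prod_univ_castSucc, Fin.snoc_castSucc, Fin.snoc_last,
        Fin.val_castSucc, Fin.val_last, hR, le_refl, Fin.is_le']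
    simp_rw [tsum_pi_snoc, hsnoc, ENNReal.tsum_mul_left, h.tsum_transition, mul_one, ih]

theorem measure_splitPath_eq (d : ℕ → A) {n : ℕ} (x : Fin (n + 1) → A) (k : Fin (n + 1) → κ) :
    P (splitPath Z (n + 1) ⁻¹' {(x, k)}) = regimeWeight R d x * letterWeight p x k := by
  have hcyl := h.measure_cylinder n (Function.extend Fin.val x d)
    (Function.extend Fin.val k fun _ => k 0)
  simp only [Finset.prod_range, Fin.val_injective.extend_apply] at hcyl
  rw [regimeWeight, letterWeight, ← hcyl]
  congr 1
  ext ω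
  simp only [splitPath, Set.mem_preimage, Set.mem_singleton_iff, Prod.ext_iff, funext_iff,
    Set.mem_iInter, Set.mem_ofPred_eq, mem_range, ← forall_and, Fin.forall_iff]
  refine forall₂_congr fun i hi => ?_
  simp only [← Fin.val_injective.extend_apply x d ⟨i, hi⟩,
    ← Fin.val_injective.extend_apply k (fun _ => k 0) ⟨i, hi⟩]

variable [Countable A] [Countable κ] [IsProbabilityMeasure P]

theorem measure_splitPath_mem (d : ℕ → A) {n : ℕ}
    (Q : (Fin (n + 1) → A) × (Fin (n + 1) → κ) → Prop) [DecidablePred Q] :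
    P {ω | Q (splitPath Z (n + 1) ω)} = ∑' x : Fin (n + 1) → A,
      regimeWeight R d x * ∑' k, if Q (x, k) then letterWeight p x k else 0 := by
  have htotal : ∑' s, P (splitPath Z (n + 1) ⁻¹' {s}) = P Set.univ := by
    simp only [ENNReal.tsum_prod', h.measure_splitPath_eq d, ENNReal.tsum_mul_left,
      tsum_letterWeight h.tsum_letter, mul_one, h.tsum_regimeWeight, measure_univ]
  refine (measure_preimage_eq_tsum htotal {s | Q s}).trans ?_
  rw [tsum_subtype {s | Q s} fun s => P (splitPath Z (n + 1) ⁻¹' {s}), ENNReal.tsum_prod']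
  simp only [Set.indicator_apply, Set.mem_ofPred_eq, h.measure_splitPath_eq d,
    ← ENNReal.tsum_mul_left, mul_ite, mul_zero]

theorem measure_repeatCount_eq [DecidableEq A] [DecidableEq κ] (d : ℕ → A) (n r : ℕ) :
    P {ω | repeatCount (fun i : Fin (n + 1) => Z i ω) = r} = ∑' x : Fin (n + 1) → A,
      regimeWeight R d x *
        ∑' k, if repeatCount (fun i => (x i, k i)) = r then letterWeight p x k else 0 :=
  h.measure_splitPath_mem d fun s => repeatCount (fun i => (s.1 i, s.2 i)) = r

theorem measure_repeatCount_fst_eq [DecidableEq A] (d : ℕ → A) (n m : ℕ) :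
    P {ω | repeatCount (fun i : Fin (n + 1) => (Z i ω).1) = m} = ∑' x : Fin (n + 1) → A,
      regimeWeight R d x * if repeatCount x = m then 1 else 0 := by
  refine (h.measure_splitPath_mem d fun s => repeatCount s.1 = m).trans (tsum_congr fun x => ?_)
  split_ifs <;> simp [tsum_letterWeight h.tsum_letter]

end IsRegimeSwitching

theorem regime_switching_finite_support_bound_general {A κ Ω : Type*} [Countable A] [Countable κ]
    [DecidableEq A] [DecidableEq κ] [MeasurableSpace Ω] {P : Measure Ω} [IsProbabilityMeasure P]
    {Z : ℕ → Ω → A × κ} {p : A → κ → ℝ≥0∞} {R : ℕ → (ℕ → A) → A → ℝ≥0∞}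
    (h : IsRegimeSwitching P Z p R) {M : ℕ} (hM : ∀ a, (Function.support (p a)).encard ≤ M)
    (n r : ℕ) :
    P {ω | (∑ i ∈ range n, if Z i ω = Z n ω then 1 else 0 : ℕ) = r} ≤
      ∑ m ∈ Icc r n, repeatCoeff p M r m *
        P {ω | (∑ i ∈ range n, if (Z i ω).1 = (Z n ω).1 then 1 else 0 : ℕ) = m} := by
  obtain ⟨ω₀⟩ : Nonempty Ω := P.nonempty_of_neZero
  let d (i : ℕ) : A := (Z i ω₀).1
  simp only [sum_range_ite_eq_repeatCount fun i => Z i _,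
    sum_range_ite_eq_repeatCount fun i => (Z i _).1, h.measure_repeatCount_eq d,
    h.measure_repeatCount_fst_eq d]
  calc _ ≤ ∑' x : Fin (n + 1) → A, regimeWeight R d x *
        ∑ m ∈ Icc r n, repeatCoeff p M r m * if repeatCount x = m then 1 else 0 := by
        gcongr with x
        exact tsum_letterWeight_of_repeatCount_eq_le h.tsum_letter hM x r
    _ = _ := by
        simp_rw [mul_sum, ← ENNReal.tsum_mul_left, mul_left_comm]
        exact Summable.tsum_finsetSum fun _ _ => ENNReal.summable

/-- Example 4.2: in the regime switching model where every distribution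
`P_a` has support contained in `{0,…,M−1}` (i.e. at most `M` letters), for `n ≥ 1` and
`0 ≤ r ≤ n−1`: `P{𝓛_n = r} ≤ Σ_{m=r}^n C'_{r,m} P{L_n = m}` with
`C'_{r,r} = sup_a Σ_k p_{a,k}^{1+r}` and `C'_{r,m} = c(r)M/m` for `r+1 ≤ m ≤ n`. -/
theorem regime_switching_finite_support_bound {A : Type*} [Countable A] [DecidableEq A]
    {Ω : Type*} [MeasurableSpace Ω] (P : Measure Ω) [IsProbabilityMeasure P]
    (Z : ℕ → Ω → A × ℕ)
    (p : A → ℕ → ℝ≥0∞) (hp : ∀ a, ∑' k, p a k = 1)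
    (M : ℕ) (hM : ∀ a, ∀ k, M ≤ k → p a k = 0)
    (R : ℕ → (ℕ → A) → A → ℝ≥0∞)
    (hRdep : ∀ (n : ℕ) (a a' : ℕ → A), (∀ i < n, a i = a' i) → R n a = R n a')
    (hRsum : ∀ (n : ℕ) (a : ℕ → A), ∑' b, R n a b = 1)
    (hZ : ∀ (n : ℕ) (a : ℕ → A) (k : ℕ → ℕ),
      P (⋂ i ∈ Finset.range (n + 1), {ω | Z i ω = (a i, k i)}) =
        (∏ i ∈ Finset.range (n + 1), R i a (a i)) *
          ∏ i ∈ Finset.range (n + 1), p (a i) (k i))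
    (n r : ℕ) (hn : 1 ≤ n) (hr : r ≤ n - 1) :
    P {ω | (∑ i ∈ Finset.range n, if Z i ω = Z n ω then 1 else 0 : ℕ) = r} ≤
      ∑ m ∈ Finset.Icc r n,
        (if m = r then ⨆ a : A, ∑' k, p a k ^ (r + 1)
         else cDGP r * (M : ℝ≥0∞) / (m : ℝ≥0∞)) *
          P {ω | (∑ i ∈ Finset.range n, if (Z i ω).1 = (Z n ω).1 then 1 else 0 : ℕ) = m} := by
  exact regime_switching_finite_support_bound_general ⟨hp, hRdep, hRsum, hZ⟩
    (fun a => encard_support_le_of_eq_zero (hM a)) n r
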